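/- Let G be a finite (not necessarily connected) simple graph and h: V(G) → ℕ a function attaining only even values. Then there exist an edge-weighting ω: E(G) → {1,2,3} and a function f: V(G) → ℕ attaining only odd values such that (i) f(v) ≠ f(w) for every edge {v,w} ∈ E(G), and (ii) |s_ω(v) + h(v) − f(v)| = 1 for all v ∈ V(G). -/

import Mathlib

open Finset

/-- The weighted degree of `v`. -/
def wdeg {V : Type*} [Fintype V] [DecidableEq V] (G : SimpleGraph V) [DecidableRel G.Adj]
    (ω : V → V → ℕ) (v : V) : ℕ :=
  ∑ u ∈ G.neighborFinset v, ω v u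

/-- integer flow lemma via Hall -/
theorem flow_lemma {V : Type*} [Fintype V] [DecidableEq V] (C : V → V → Prop)
    [DecidableRel C] (hC : ∀ u v, C u v → C v u) (hirr : ∀ u, ¬ C u u) (b : V → ℤ) (hb : ∑ v, b v = 0)
    (hX : ∀ X : Finset V, - ∑ v ∈ X, b v ≤
      ∑ v ∈ X, ∑ u ∈ Xᶜ, (if C v u then (1 : ℤ) else 0)) :
    ∃ y : V → V → ℤ, (∀ u v, y u v = - y v u) ∧ (∀ u v, |y u v| ≤ 1) ∧
      (∀ u v, ¬ C u v → y u v = 0) ∧ ∀ v, ∑ u, y v u = b v := by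
  classical
  let d : V → ℤ := fun v => ∑ u, if C v u then (1 : ℤ) else 0
  have hm0 : ∀ v, 0 ≤ d v + b v := by
    intro v
    have h1 := hX {v}
    simp only [Finset.sum_singleton] at h1
    have h2 : ∑ u ∈ ({v} : Finset V)ᶜ, (if C v u then (1 : ℤ) else 0) ≤ d v := by
      apply Finset.sum_le_sum_of_subset_of_nonneg (Finset.subset_univ _)
      intros; split_ifs <;> simp
    linarith
  let m : V → ℕ := fun v => (d v + b v).toNat
  have hm : ∀ v, (m v : ℤ) = d v + b v := fun v => Int.toNat_of_nonneg (hm0 v)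
  let I := {p : V × V // C p.1 p.2}
  let t : I → Finset (Σ v : V, Fin (m v)) := fun p =>
    ({p.1.1, p.1.2} : Finset V).sigma (fun _ => Finset.univ)
  have hcardI : ∀ X : Finset V, ((Finset.univ.filter (fun p : I => p.1.1 ∈ X ∧ p.1.2 ∈ X)).card : ℤ)
      = ∑ v ∈ X, ∑ u ∈ X, if C v u then (1 : ℤ) else 0 := by
    intro X
    rw [← Finset.sum_product' (f := fun v u => if C v u then (1 : ℤ) else 0), ← Finset.sum_filter,
      Finset.sum_const, nsmul_eq_mul, mul_one]
    congr 1
    apply Finset.card_bij (fun p _ => p.1)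
    · intro p hp
      simp at hp ⊢
      exact ⟨hp, p.2⟩
    · intro p _ q _ h; exact Subtype.ext h
    · intro p hp
      simp at hp
      exact ⟨⟨p, hp.2⟩, by simpa using hp.1, rfl⟩
  have hall : ∀ F : Finset I, F.card ≤ (F.biUnion t).card := by
    intro F
    let X : Finset V := F.biUnion (fun p => {p.1.1, p.1.2})
    have e1 : F.biUnion t = X.sigma (fun _ => Finset.univ) := by
      ext ⟨v, i⟩
      simp [X, t]
    rw [e1, Finset.card_sigma]
    have e2 : F ⊆ Finset.univ.filter (fun p : I => p.1.1 ∈ X ∧ p.1.2 ∈ X) := by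
      intro p hp
      simp only [Finset.mem_filter, Finset.mem_univ, true_and, X, Finset.mem_biUnion]
      exact ⟨⟨p, hp, by simp⟩, ⟨p, hp, by simp⟩⟩
    have e3 := Finset.card_le_card e2
    have e4 := hcardI X
    have e5 : ∑ v ∈ X, (m v : ℤ) = ∑ v ∈ X, ∑ u ∈ X, (if C v u then (1 : ℤ) else 0)
        + ∑ v ∈ X, ∑ u ∈ Xᶜ, (if C v u then (1 : ℤ) else 0) + ∑ v ∈ X, b v := by
      rw [← Finset.sum_add_distrib, ← Finset.sum_add_distrib]
      apply Finset.sum_congr rfl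
      intro v _
      rw [hm, Finset.sum_add_sum_compl]
    have e6 := hX X
    zify
    simp only [Finset.card_univ, Fintype.card_fin]
    rw [e5]
    zify at e3
    linarith
  obtain ⟨g, ginj, hg⟩ := (Finset.all_card_le_biUnion_card_iff_exists_injective t).1 hall
  have hcard : Fintype.card I = Fintype.card (Σ v : V, Fin (m v)) := by
    have e4 := hcardI Finset.univ
    simp only [Finset.mem_univ, and_self, Finset.filter_true, Finset.card_univ] at e4
    rw [Fintype.card_sigma]
    zify
    simp only [Fintype.card_fin]
    rw [e4, Finset.sum_congr rfl (fun v _ => hm v), Finset.sum_add_distrib, hb, add_zero]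
  have gbij : Function.Bijective g := (Fintype.bijective_iff_injective_and_card g).2 ⟨ginj, hcard⟩
  have hg' : ∀ p : I, (g p).1 = p.1.1 ∨ (g p).1 = p.1.2 := by
    intro p
    have := hg p
    simpa [t] using this
  let A : V → V → ℤ := fun u v => if h : C u v then (if (g ⟨(u, v), h⟩).1 = u then 1 else 0) else 0
  have hcount : ∀ v, ((Finset.univ.filter (fun p : I => (g p).1 = v)).card : ℤ) = m v := by
    intro v
    have : (Finset.univ.filter (fun p : I => (g p).1 = v)).card =
        (({v} : Finset V).sigma (fun v => (Finset.univ : Finset (Fin (m v))))).card := by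
      apply Finset.card_bij (fun p _ => g p)
      · intro p hp
        simpa using hp
      · intro p _ q _ h; exact ginj h
      · intro s hs
        obtain ⟨p, rfl⟩ := gbij.2 s
        exact ⟨p, by simpa using hs, rfl⟩
    rw [this]
    simp
  have hA : ∀ v, ((Finset.univ.filter (fun p : I => (g p).1 = v)).card : ℤ) =
      ∑ u, (A v u + ((if C v u then 1 else 0) - A u v)) := by
    intro v
    have k1 : ((Finset.univ.filter (fun p : I => (g p).1 = v)).card : ℤ) =
        ∑ p : V × V, if h : C p.1 p.2 then (if (g ⟨p, h⟩).1 = v then (1 : ℤ) else 0) else 0 := by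
      rw [Finset.card_filter]
      push_cast
      symm
      rw [← Finset.sum_filter_of_ne (p := fun p : V × V => C p.1 p.2)
        (fun p _ hp => by by_contra hc; simp [hc] at hp)]
      rw [Finset.sum_subtype (p := fun p : V × V => C p.1 p.2) _ (by simp)]
      apply Finset.sum_congr rfl
      intro p _
      rw [dif_pos p.2]
    have k2 : ∀ p : V × V, (if h : C p.1 p.2 then (if (g ⟨p, h⟩).1 = v then (1 : ℤ) else 0) else 0)
        = (if p.1 = v then A v p.2 else 0) +
          (if p.2 = v then ((if C v p.1 then 1 else 0) - A p.1 v) else 0) := by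
      rintro ⟨a, c⟩
      by_cases h : C a c
      · have hne : a ≠ c := fun h' => hirr a (by rw [← h'] at h; exact h)
        have hgp := hg' ⟨(a, c), h⟩
        have hca := hC _ _ h
        by_cases ha : a = v
        · subst ha
          simp [h, hne.symm, A]
        · by_cases hc : c = v
          · subst hc
            rcases hgp with hgp | hgp
            · simp at hgp
              simp [h, hca, hne, A, hgp]
            · simp at hgp
              simp [h, hca, hne, hne.symm, A, hgp]
          · have : (g ⟨(a, c), h⟩).1 ≠ v := by
              rcases hgp with hgp | hgp <;> rw [hgp] <;> assumption
            simp [ha, hc, this]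
      · have hca : ¬ C c a := fun h' => h (hC _ _ h')
        by_cases ha : a = v
        · subst ha
          by_cases hc : c = a
          · subst hc; simp [h, A]
          · simp [h, A, hc]
        · by_cases hc : c = v
          · subst hc; simp [h, hca, A, ha]
          · simp [h, ha, hc]
    rw [k1, Finset.sum_congr rfl (fun p _ => k2 p), Finset.sum_add_distrib, Finset.sum_add_distrib,
      Fintype.sum_prod_type, Fintype.sum_prod_type]
    congr 1
    · rw [Finset.sum_comm]
      simp
    · simp
  refine ⟨fun u v => A u v - A v u, fun u v => by ring, ?_, ?_, ?_⟩
  · intro u v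
    have hA01 : ∀ u v, 0 ≤ A u v ∧ A u v ≤ 1 := by
      intro u v
      simp only [A]
      split_ifs <;> simp
    rw [abs_le]
    have := hA01 u v
    have := hA01 v u
    constructor <;> linarith
  · intro u v h
    have h' : ¬ C v u := fun h' => h (hC _ _ h')
    simp [A, h, h']
  · intro v
    have h1 := hA v
    rw [hcount, hm] at h1
    have : ∑ u, (A v u + ((if C v u then 1 else 0) - A u v)) = ∑ u, (A v u - A u v) + d v := by
      rw [← Finset.sum_add_distrib]
      apply Finset.sum_congr rfl
      intros; ring
    linarith

theorem greedy {V : Type*} [Fintype V] [DecidableEq V] (r : V → ℕ) (Nb : V → Finset V)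
    (hr : ∀ v, ∀ u ∈ Nb v, r u < r v) (base : V → ℤ) :
    ∃ k : V → ℕ, ∀ v, k v ≤ (Nb v).card ∧
      ∀ u ∈ Nb v, base v + 4 * (k v : ℤ) ≠ base u + 4 * (k u : ℤ) := by
  have key : ∀ N : ℕ, ∃ k : V → ℕ, ∀ v, r v < N → k v ≤ (Nb v).card ∧
      ∀ u ∈ Nb v, base v + 4 * (k v : ℤ) ≠ base u + 4 * (k u : ℤ) := by
    intro N
    induction N with
    | zero => exact ⟨fun _ => 0, fun v h => absurd h (by omega)⟩
    | succ N ih =>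
      obtain ⟨k, hk⟩ := ih
      have ex : ∀ v, ∃ j : ℕ, j ≤ (Nb v).card ∧
          ∀ u ∈ Nb v, base v + 4 * (j : ℤ) ≠ base u + 4 * (k u : ℤ) := by
        intro v
        have hlt : ((Nb v).image (fun u => base u + 4 * (k u : ℤ))).card <
            ((Finset.range ((Nb v).card + 1)).image (fun j : ℕ => base v + 4 * (j : ℤ))).card := by
          rw [Finset.card_image_of_injective (Finset.range _)]
          · have := Finset.card_image_le (s := Nb v) (f := fun u => base u + 4 * (k u : ℤ))
            rw [Finset.card_range]; omega
          · intro a b hab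
            simp at hab
            exact hab
        obtain ⟨z, hz, hz'⟩ := Finset.exists_mem_notMem_of_card_lt_card hlt
        simp only [Finset.mem_image, Finset.mem_range] at hz hz'
        obtain ⟨j, hj, rfl⟩ := hz
        exact ⟨j, by omega, fun u hu h => hz' ⟨u, hu, h.symm⟩⟩
      choose j hj using ex
      refine ⟨fun v => if r v < N then k v else j v, fun v hv => ?_⟩
      have hu : ∀ u ∈ Nb v, r u < N := fun u hu => by have := hr v u hu; omega
      by_cases h : r v < N
      · refine ⟨by simpa [h] using (hk v h).1, fun u hu' => ?_⟩
        simpa [h, hu u hu'] using (hk v h).2 u hu'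
      · refine ⟨by simpa [h] using (hj v).1, fun u hu' => ?_⟩
        simpa [h, hu u hu'] using (hj v).2 u hu'
  obtain ⟨k, hk⟩ := key (Finset.univ.sup r + 1)
  exact ⟨k, fun v => hk v (by have := Finset.le_sup (f := r) (Finset.mem_univ v); omega)⟩

theorem maxcut {V : Type*} [Fintype V] [DecidableEq V] (G : SimpleGraph V) [DecidableRel G.Adj] :
    ∃ side : V → Bool, ∀ X : Finset V,
      ∑ v ∈ X, ∑ u ∈ Xᶜ, (if G.Adj v u ∧ side v = side u then (1 : ℤ) else 0) ≤
      ∑ v ∈ X, ∑ u ∈ Xᶜ, (if G.Adj v u ∧ side v ≠ side u then (1 : ℤ) else 0) := by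
  obtain ⟨side, -, hs⟩ := Finset.exists_max_image (Finset.univ : Finset (V → Bool))
    (fun s => ∑ v, ∑ u, (if G.Adj v u ∧ s v ≠ s u then (1 : ℤ) else 0)) ⟨fun _ => true, by simp⟩
  refine ⟨side, fun X => ?_⟩
  have h := hs (fun v => if v ∈ X then !side v else side v) (Finset.mem_univ _)
  have split : ∀ F : V → V → ℤ, ∑ v, ∑ u, F v u = ∑ v ∈ X, ∑ u ∈ X, F v u + ∑ v ∈ X, ∑ u ∈ Xᶜ, F v u
      + (∑ v ∈ Xᶜ, ∑ u ∈ X, F v u + ∑ v ∈ Xᶜ, ∑ u ∈ Xᶜ, F v u) := by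
    intro F
    rw [← Finset.sum_add_distrib, ← Finset.sum_add_distrib, ← Finset.sum_add_sum_compl X]
    congr 1 <;> exact Finset.sum_congr rfl (fun v _ => (Finset.sum_add_sum_compl X _).symm)
  rw [split, split (fun v u => if G.Adj v u ∧ side v ≠ side u then (1 : ℤ) else 0)] at h
  rw [Finset.sum_comm (s := Xᶜ) (t := X), Finset.sum_comm (s := Xᶜ) (t := X)] at h
  have a1 : ∑ v ∈ X, ∑ u ∈ X, (if G.Adj v u ∧ (if v ∈ X then !side v else side v) ≠ (if u ∈ X then !side u else side u) then (1 : ℤ) else 0)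
     = ∑ v ∈ X, ∑ u ∈ X, (if G.Adj v u ∧ side v ≠ side u then (1 : ℤ) else 0) := by
    refine Finset.sum_congr rfl fun v hv => Finset.sum_congr rfl fun u hu => ?_
    simp [hv, hu]
  have a2 : ∑ v ∈ Xᶜ, ∑ u ∈ Xᶜ, (if G.Adj v u ∧ (if v ∈ X then !side v else side v) ≠ (if u ∈ X then !side u else side u) then (1 : ℤ) else 0)
     = ∑ v ∈ Xᶜ, ∑ u ∈ Xᶜ, (if G.Adj v u ∧ side v ≠ side u then (1 : ℤ) else 0) := by
    refine Finset.sum_congr rfl fun v hv => Finset.sum_congr rfl fun u hu => ?_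
    simp only [Finset.mem_compl] at hv hu
    simp [hv, hu]
  have a3 : ∑ v ∈ X, ∑ u ∈ Xᶜ, (if G.Adj v u ∧ (if v ∈ X then !side v else side v) ≠ (if u ∈ X then !side u else side u) then (1 : ℤ) else 0)
     = ∑ v ∈ X, ∑ u ∈ Xᶜ, (if G.Adj v u ∧ side v = side u then (1 : ℤ) else 0) := by
    refine Finset.sum_congr rfl fun v hv => Finset.sum_congr rfl fun u hu => ?_
    simp only [Finset.mem_compl] at hu
    simp [hv, hu]
  have a4 : ∑ v ∈ X, ∑ u ∈ Xᶜ, (if G.Adj u v ∧ (if u ∈ X then !side u else side u) ≠ (if v ∈ X then !side v else side v) then (1 : ℤ) else 0)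
     = ∑ v ∈ X, ∑ u ∈ Xᶜ, (if G.Adj v u ∧ side v = side u then (1 : ℤ) else 0) := by
    refine Finset.sum_congr rfl fun v hv => Finset.sum_congr rfl fun u hu => ?_
    simp only [Finset.mem_compl] at hu
    have : (side u = !side v) ↔ ¬ (side v = side u) := by cases side u <;> cases side v <;> simp
    simp [hv, hu, G.adj_comm u v, this]
  have a5 : ∑ v ∈ X, ∑ u ∈ Xᶜ, (if G.Adj u v ∧ side u ≠ side v then (1 : ℤ) else 0)
     = ∑ v ∈ X, ∑ u ∈ Xᶜ, (if G.Adj v u ∧ side v ≠ side u then (1 : ℤ) else 0) := by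
    refine Finset.sum_congr rfl fun v hv => Finset.sum_congr rfl fun u hu => ?_
    simp [G.adj_comm u v, eq_comm]
  rw [a1, a2, a3, a4, a5] at h
  linarith

theorem stmt2 {V : Type*} [Fintype V] [DecidableEq V] (G : SimpleGraph V) [DecidableRel G.Adj]
    (h : V → ℕ) (hh : ∀ v, Even (h v)) :
    ∃ (ω : V → V → ℕ) (f : V → ℕ),
      (∀ a b, ω a b = ω b a) ∧
      (∀ a b, G.Adj a b → ω a b ∈ ({1, 2, 3} : Set ℕ)) ∧
      (∀ v, Odd (f v)) ∧
      (∀ v w, G.Adj v w → f v ≠ f w) ∧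
      (∀ v, |(wdeg G ω v : ℤ) + (h v : ℤ) - (f v : ℤ)| = 1) := by
  classical
  obtain ⟨side, hside⟩ := maxcut G
  let r : V → ℕ := fun v => (Fintype.equivFin V v : ℕ)
  have rinj : ∀ u v, r u = r v → u = v := fun u v huv =>
    (Fintype.equivFin V).injective (Fin.ext huv)
  let Nb : V → Finset V := fun v => Finset.univ.filter
    (fun u => (G.Adj v u ∧ side v = side u) ∧ r u < r v)
  have hNb : ∀ v u, u ∈ Nb v ↔ (G.Adj v u ∧ side v = side u) ∧ r u < r v := by
    intro v u; simp [Nb]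
  let dc : V → ℤ := fun v => ∑ u, if G.Adj v u ∧ side v ≠ side u then (1 : ℤ) else 0
  let fw : V → ℤ := fun v => ∑ u, if (G.Adj v u ∧ side v = side u) ∧ r v < r u then (1 : ℤ) else 0
  let e0 : V → ℤ := fun v => 2 * dc v + 2 * fw v + h v
  let cls : V → ℤ := fun v => if side v then 1 else 3
  let f0 : V → ℤ := fun v => if (e0 v + 1) % 4 = cls v then e0 v + 1 else e0 v - 1
  have he0 : ∀ v, e0 v % 2 = 0 := by
    intro v
    obtain ⟨q, hq⟩ := hh v
    simp only [e0]; omega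
  have hf0 : ∀ v, (f0 v = e0 v + 1 ∨ f0 v = e0 v - 1) ∧ f0 v % 4 = cls v := by
    intro v
    have := he0 v
    simp only [f0, cls]
    split_ifs <;> omega
  obtain ⟨k, hk⟩ := greedy r Nb (fun v u hu => ((hNb v u).1 hu).2) f0
  have hB : ∀ v, ∃ B ⊆ Nb v, B.card = k v := fun v => Finset.exists_subset_card_eq (hk v).1
  choose B hBs hBc using hB
  have hB' : ∀ v u, u ∈ B v → (G.Adj v u ∧ side v = side u) ∧ r u < r v :=
    fun v u hu => (hNb v u).1 (hBs v hu)
  let ε : V → ℤ := fun v => if side v then 1 else -1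
  have hεε : ∀ v, ε v * ε v = 1 := by intro v; simp only [ε]; split_ifs <;> rfl
  let ψ : V → V → ℤ := fun v u => if G.Adj v u ∧ side v = side u then
    (if r u < r v then (if u ∈ B v then 1 else -1) else (if v ∈ B u then -1 else 1)) else 0
  have hψs : ∀ v u, ε v * ψ v u = - (ε u * ψ u v) := by
    intro v u
    by_cases hi : G.Adj v u ∧ side v = side u
    · have hi' : G.Adj u v ∧ side u = side v := ⟨hi.1.symm, hi.2.symm⟩
      have hne : r u ≠ r v := fun h' => hi.1.ne' (rinj _ _ h')
      have : ε u = ε v := by simp only [ε, hi.2]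
      rw [this]
      simp only [ψ, if_pos hi, if_pos hi']
      rcases lt_or_gt_of_ne hne with hl | hl
      · rw [if_pos hl, if_neg (show ¬ r v < r u by omega)]; split_ifs <;> ring
      · rw [if_neg (show ¬ r u < r v by omega), if_pos hl]; split_ifs <;> ring
    · have hi' : ¬ (G.Adj u v ∧ side u = side v) := fun h' => hi ⟨h'.1.symm, h'.2.symm⟩
      simp only [ψ, if_neg hi, if_neg hi']; ring
  have hψb : ∀ v u, - (ε v * ψ v u) ≤ if G.Adj v u ∧ side v = side u then (1 : ℤ) else 0 := by
    intro v u
    simp only [ψ, ε]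
    split_ifs <;> norm_num
  have hanti : ∀ X : Finset V, ∑ v ∈ X, ∑ u ∈ X, ε v * ψ v u = 0 := by
    intro X
    have h1 : ∑ v ∈ X, ∑ u ∈ X, ε v * ψ v u = - ∑ v ∈ X, ∑ u ∈ X, ε v * ψ v u := by
      conv_lhs => rw [Finset.sum_comm]
      rw [← Finset.sum_neg_distrib]
      refine Finset.sum_congr rfl fun v _ => ?_
      rw [← Finset.sum_neg_distrib]
      exact Finset.sum_congr rfl fun u _ => hψs u v
    linarith
  obtain ⟨y, ys, yb, y0, ysum⟩ := flow_lemma (fun v u => G.Adj v u ∧ side v ≠ side u)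
    (fun u v h' => ⟨h'.1.symm, h'.2.symm⟩) (fun u h' => h'.2 rfl)
    (fun v => ∑ u, ε v * ψ v u) (hanti Finset.univ) (by
      intro X
      have h1 : ∑ v ∈ X, ∑ u, ε v * ψ v u = ∑ v ∈ X, ∑ u ∈ Xᶜ, ε v * ψ v u := by
        have h2 : ∑ v ∈ X, ∑ u, ε v * ψ v u =
            ∑ v ∈ X, ∑ u ∈ X, ε v * ψ v u + ∑ v ∈ X, ∑ u ∈ Xᶜ, ε v * ψ v u := by
          rw [← Finset.sum_add_distrib]
          exact Finset.sum_congr rfl (fun v _ => (Finset.sum_add_sum_compl X _).symm)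
        rw [h2, hanti, zero_add]
      rw [h1, ← Finset.sum_neg_distrib]
      refine le_trans (Finset.sum_le_sum fun v _ => ?_) (hside X)
      rw [← Finset.sum_neg_distrib]
      exact Finset.sum_le_sum fun u _ => hψb v u)
  let w : V → V → ℤ := fun v u => if G.Adj v u ∧ side v = side u then
    (if u ∈ B v ∨ v ∈ B u then 3 else 1) else 2 + ε v * y v u
  have hws : ∀ v u, w v u = w u v := by
    intro v u
    by_cases hi : G.Adj v u ∧ side v = side u
    · have hi' : G.Adj u v ∧ side u = side v := ⟨hi.1.symm, hi.2.symm⟩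
      simp only [w, if_pos hi, if_pos hi', or_comm]
    · have hi' : ¬ (G.Adj u v ∧ side u = side v) := fun h' => hi ⟨h'.1.symm, h'.2.symm⟩
      simp only [w, if_neg hi, if_neg hi']
      by_cases hc : G.Adj v u ∧ side v ≠ side u
      · have : ε u = - ε v := by
          have := hc.2
          simp only [ε]
          revert this
          cases side u <;> cases side v <;> simp
        rw [this, ys v u]; ring
      · rw [ys u v, y0 v u hc]; simp
  have hwr : ∀ v u, w v u = 1 ∨ w v u = 2 ∨ w v u = 3 := by
    intro v u
    have h1 := abs_le.1 (yb v u)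
    simp only [w, ε]
    split_ifs <;> omega
  have hpt : ∀ v u, (if G.Adj v u then w v u else 0) =
      2 * (if G.Adj v u ∧ side v ≠ side u then (1 : ℤ) else 0) + ε v * y v u - ψ v u
      + 2 * (if (G.Adj v u ∧ side v = side u) ∧ r v < r u then (1 : ℤ) else 0)
      + 4 * (if u ∈ B v then 1 else 0) := by
    intro v u
    by_cases ha : G.Adj v u
    · by_cases hs : side v = side u
      · have hy : y v u = 0 := y0 v u (fun h' => h'.2 hs)
        have hne : r u ≠ r v := fun h' => ha.ne' (rinj _ _ h')
        rcases lt_or_gt_of_ne hne with hl | hl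
        · have hb : v ∉ B u := fun h' => by have := (hB' _ _ h').2; omega
          have hl' : ¬ r v < r u := by omega
          by_cases hu : u ∈ B v <;> simp [w, ψ, ha, hs, hy, hl, hl', hb, hu]
        · have hb : u ∉ B v := fun h' => by have := (hB' _ _ h').2; omega
          have hl' : ¬ r u < r v := by omega
          by_cases hu : v ∈ B u <;> simp [w, ψ, ha, hs, hy, hl, hl', hb, hu]
      · have hb : u ∉ B v := fun h' => hs (hB' _ _ h').1.2
        simp [w, ψ, ha, hs, hb]
    · have hb : u ∉ B v := fun h' => ha (hB' _ _ h').1.1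
      have hy : y v u = 0 := y0 v u (fun h' => ha h'.1)
      simp [ψ, ha, hb, hy]
  have hdeg : ∀ v, (wdeg G (fun v u => (w v u).toNat) v : ℤ) + h v = e0 v + 4 * k v := by
    intro v
    have h1 : (wdeg G (fun v u => (w v u).toNat) v : ℤ) = ∑ u, if G.Adj v u then w v u else 0 := by
      unfold wdeg
      push_cast
      rw [SimpleGraph.neighborFinset_eq_filter, Finset.sum_filter]
      refine Finset.sum_congr rfl fun u _ => ?_
      have := hwr v u
      split_ifs <;> omega
    have h2 : ∑ u, ε v * y v u = ∑ u, ψ v u := by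
      have h3 := ysum v
      rw [← Finset.mul_sum] at h3
      rw [← Finset.mul_sum, h3, ← mul_assoc, hεε, one_mul]
    rw [h1, Finset.sum_congr rfl (fun u _ => hpt v u)]
    simp only [Finset.sum_add_distrib, Finset.sum_sub_distrib, h2, ← Finset.mul_sum]
    have h4 : ∑ u, (if u ∈ B v then (1 : ℤ) else 0) = k v := by
      rw [← hBc v]; simp
    rw [h4]
    simp only [e0, dc, fw]
    ring
  let F : V → ℤ := fun v => f0 v + 4 * k v
  have hdpos : ∀ v u, G.Adj v u → 1 ≤ wdeg G (fun v u => (w v u).toNat) v := by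
    intro v u hvu
    have h1 : (w v u).toNat ≤ wdeg G (fun v u => (w v u).toNat) v :=
      Finset.single_le_sum (f := fun u => (w v u).toNat) (fun _ _ => Nat.zero_le _)
        ((G.mem_neighborFinset v u).2 hvu)
    have := hwr v u
    omega
  have hFpos : ∀ v u, G.Adj v u → 1 ≤ F v := by
    intro v u hvu
    have h1 := hdpos v u hvu
    have h2 := hdeg v
    have h3 := he0 v
    have h4 := (hf0 v).1
    simp only [F]
    omega
  have hFne : ∀ v u, G.Adj v u → F v ≠ F u := by
    intro v u hvu
    by_cases hs : side v = side u
    · have hne : r u ≠ r v := fun h' => hvu.ne' (rinj _ _ h')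
      rcases lt_or_gt_of_ne hne with hl | hl
      · exact (hk v).2 u ((hNb _ _).2 ⟨⟨hvu, hs⟩, hl⟩)
      · exact ((hk u).2 v ((hNb _ _).2 ⟨⟨hvu.symm, hs.symm⟩, hl⟩)).symm
    · have h1 := (hf0 v).2
      have h2 := (hf0 u).2
      have h3 : cls v ≠ cls u := by
        revert hs
        simp only [cls]
        cases side u <;> cases side v <;> simp
      simp only [F]
      omega
  refine ⟨fun v u => (w v u).toNat, fun v => (F v).natAbs, ?_, ?_, ?_, ?_, ?_⟩
  · intro a b
    simp only [hws a b]
  · intro a b _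
    rcases hwr a b with h1 | h1 | h1 <;> simp [h1]
  · intro v
    have h3 := he0 v
    have h4 := (hf0 v).1
    rw [Nat.odd_iff]
    simp only [F]
    omega
  · intro v u hvu
    have := hFpos v u hvu
    have := hFpos u v hvu.symm
    have := hFne v u hvu
    show (F v).natAbs ≠ (F u).natAbs
    omega
  · intro v
    have h2 := hdeg v
    have h3 := he0 v
    have h4 := (hf0 v).1
    have h5 : ((F v).natAbs : ℤ) = |F v| := Int.natCast_natAbs _
    show |_ + _ - ((F v).natAbs : ℤ)| = 1
    have h6 : F v = f0 v + 4 * k v := rfl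
    rw [abs_eq (by norm_num)]
    omega
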